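/- arXiv:1309.7580 — 2 statements merged into one kernel-verified Lean document; each statement's English description precedes it below -/
import Mathlib

section
/- Fix positive integers m and m', a real α with 1/2 < α < 1, and reals 0 < c₁ < c₂. Then there exist Δ > 0 and κ > 0 (depending only on m, m', α, c₁, c₂) with the following property. Let p be a prime, G a subgroup of 𝔽_p^*, and g, h : G → 𝔽_p^* functions with μ(g) ≤ m. Define f(x,y) = g(x)(h(x) + y). Let w : G → 𝔽_p be a function with μ(w) ≤ m', and let S_w(f)(x,y) = w(x) + f(x,y). Then for every set A ⊆ G with c₁·p^α < |A| < c₂·p^α one has max( |f(A,A)|, |S_w(f)(A,A)| ) ≥ κ · |A|^{1+Δ}. -/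
section Aux

variable {F : Type*} [Field F] [Fintype F] [DecidableEq F]

/-- number of pairs `(y,z)` with `l*y + d + w z = s` -/
noncomputable def auxRho (A : Finset F) (w : F → F) (l d s : F) : ℝ :=
  ∑ v ∈ A ×ˢ A, if l * v.1 + d + w v.2 = s then (1 : ℝ) else 0

/-- energy -/
noncomputable def auxEn (A : Finset F) (w : F → F) (l : F) : ℝ :=
  ∑ v ∈ A ×ˢ A, ∑ u ∈ A ×ˢ A, if l * v.1 + w v.2 = l * u.1 + w u.2 then (1 : ℝ) else 0

theorem auxRho_sum (A : Finset F) (w : F → F) (l d : F) :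
    ∑ s, auxRho A w l d s = (A.card : ℝ) ^ 2 := by
  unfold auxRho
  rw [Finset.sum_comm]
  simp [sq]

theorem auxRho_sq (A : Finset F) (w : F → F) (l d : F) :
    ∑ s, auxRho A w l d s ^ 2 = auxEn A w l := by
  unfold auxRho auxEn
  simp_rw [sq, Finset.sum_mul_sum]
  rw [Finset.sum_comm]
  refine Finset.sum_congr rfl fun v _ => ?_
  rw [Finset.sum_comm]
  refine Finset.sum_congr rfl fun u _ => ?_
  have : ∀ s : F, ((if l * v.1 + d + w v.2 = s then (1 : ℝ) else 0) *
      (if l * u.1 + d + w u.2 = s then (1 : ℝ) else 0)) =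
      if l * v.1 + d + w v.2 = s then
        (if l * v.1 + w v.2 = l * u.1 + w u.2 then (1 : ℝ) else 0) else 0 := by
    intro s
    by_cases h1 : l * v.1 + d + w v.2 = s
    · have : (l * u.1 + d + w u.2 = s) ↔ l * v.1 + w v.2 = l * u.1 + w u.2 := by
        subst h1
        constructor <;> intro h <;> linear_combination (-1 : F) * h
      simp [h1, this]
    · simp [h1]
  simp_rw [this]
  simp

theorem auxRho_var (A : Finset F) (w : F → F) (l d : F) :
    ∑ s, (auxRho A w l d s - (A.card : ℝ) ^ 2 / Fintype.card F) ^ 2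
      = auxEn A w l - (A.card : ℝ) ^ 4 / Fintype.card F := by
  have hq : (Fintype.card F : ℝ) ≠ 0 := by simp
  have : ∀ s, (auxRho A w l d s - (A.card : ℝ) ^ 2 / Fintype.card F) ^ 2 =
      auxRho A w l d s ^ 2 - (2 * ((A.card : ℝ) ^ 2 / Fintype.card F)) * auxRho A w l d s
        + ((A.card : ℝ) ^ 2 / Fintype.card F) ^ 2 := by intro s; ring
  simp_rw [this]
  rw [Finset.sum_add_distrib, Finset.sum_sub_distrib, ← Finset.mul_sum, auxRho_sum, auxRho_sq]
  simp only [Finset.sum_const, Finset.card_univ, nsmul_eq_mul]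
  field_simp
  ring

theorem auxEn_nonneg (A : Finset F) (w : F → F) (l : F) :
    0 ≤ auxEn A w l - (A.card : ℝ) ^ 4 / Fintype.card F := by
  rw [← auxRho_var A w l 0]
  positivity

theorem auxEn_sum (A : Finset F) (w : F → F) (m' : ℕ)
    (hw : ∀ t, (A.filter fun x => w x = t).card ≤ m') :
    ∑ l, auxEn A w l ≤ (A.card : ℝ) ^ 4 + Fintype.card F * m' * (A.card : ℝ) ^ 2 := by
  unfold auxEn
  have key : ∀ v u : F × F,
      (∑ l : F, if l * v.1 + w v.2 = l * u.1 + w u.2 then (1 : ℝ) else 0) ≤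
        1 + (if u.1 = v.1 then (1 : ℝ) else 0) *
          ((if w u.2 = w v.2 then (1 : ℝ) else 0) * Fintype.card F) := by
    intro v u
    by_cases h1 : u.1 = v.1
    · by_cases h2 : w u.2 = w v.2
      · simp [h1, h2]
      · have h3 : ¬ w v.2 = w u.2 := fun h => h2 h.symm
        simp [h1, h2, h3]
    · have hne : v.1 - u.1 ≠ 0 := fun h => h1 (sub_eq_zero.1 h).symm
      have : ∀ l : F, (l * v.1 + w v.2 = l * u.1 + w u.2) ↔ l = (w u.2 - w v.2) / (v.1 - u.1) := by
        intro l
        rw [eq_div_iff hne]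
        constructor <;> intro h <;> linear_combination h
      simp [this, h1]
  rw [Finset.sum_comm]
  calc _ ≤ ∑ v ∈ A ×ˢ A, ((A.card : ℝ) ^ 2 + m' * Fintype.card F) := ?_
    _ = _ := by simp; ring
  refine Finset.sum_le_sum fun v hv => ?_
  rw [Finset.sum_comm]
  calc _ ≤ ∑ u ∈ A ×ˢ A, (1 + (if u.1 = v.1 then (1 : ℝ) else 0) *
          ((if w u.2 = w v.2 then (1 : ℝ) else 0) * Fintype.card F)) :=
        Finset.sum_le_sum fun u _ => key v u
    _ = (A.card : ℝ) ^ 2 + (∑ y ∈ A, if y = v.1 then (1 : ℝ) else 0) *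
          ((∑ z ∈ A, if w z = w v.2 then (1 : ℝ) else 0) * Fintype.card F) := by
        rw [Finset.sum_add_distrib, Finset.sum_mul A (fun z => if w z = w v.2 then (1 : ℝ) else 0),
          Finset.sum_mul_sum]
        congr 1
        · simp [sq]
        · rw [Finset.sum_product]
    _ ≤ _ := by
        have h1 : (∑ y ∈ A, if y = v.1 then (1 : ℝ) else 0) = 1 := by
          rw [Finset.sum_ite_eq' A v.1]
          simp [(Finset.mem_product.1 hv).1]
        have h2 : (∑ z ∈ A, if w z = w v.2 then (1 : ℝ) else 0) ≤ m' := by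
          rw [Finset.sum_boole]
          exact_mod_cast hw _
        rw [h1, one_mul]
        gcongr

theorem auxEn_sum_g (A : Finset F) (g w : F → F) (m m' : ℕ)
    (hg : ∀ t, (A.filter fun x => g x = t).card ≤ m)
    (hw : ∀ t, (A.filter fun x => w x = t).card ≤ m') :
    ∑ x ∈ A, (auxEn A w (g x) - (A.card : ℝ) ^ 4 / Fintype.card F) ≤
      m * m' * Fintype.card F * (A.card : ℝ) ^ 2 := by
  have hq : (Fintype.card F : ℝ) ≠ 0 := by simp
  calc _ = ∑ l, ∑ x ∈ A with g x = l,
        (auxEn A w (g x) - (A.card : ℝ) ^ 4 / Fintype.card F) := by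
        rw [Finset.sum_fiberwise]
    _ ≤ ∑ l, m * (auxEn A w l - (A.card : ℝ) ^ 4 / Fintype.card F) := by
        refine Finset.sum_le_sum fun l _ => ?_
        rw [Finset.sum_congr rfl (g := fun _ => auxEn A w l - (A.card : ℝ) ^ 4 / Fintype.card F)
          (fun x hx => by rw [(Finset.mem_filter.1 hx).2])]
        rw [Finset.sum_const, nsmul_eq_mul]
        exact mul_le_mul_of_nonneg_right (by exact_mod_cast hg l) (auxEn_nonneg A w l)
    _ = m * (∑ l, auxEn A w l - (A.card : ℝ) ^ 4) := by
        rw [← Finset.mul_sum, Finset.sum_sub_distrib]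
        simp only [Finset.sum_const, Finset.card_univ, nsmul_eq_mul]
        congr 2
        field_simp
    _ ≤ m * (Fintype.card F * m' * (A.card : ℝ) ^ 2) := by
        have := auxEn_sum A w m' hw
        gcongr
        linarith
    _ = _ := by ring

theorem aux_upper (A S : Finset F) (g k w : F → F) (m m' : ℕ)
    (hg : ∀ t, (A.filter fun x => g x = t).card ≤ m)
    (hw : ∀ t, (A.filter fun x => w x = t).card ≤ m') :
    (∑ x ∈ A, ∑ s ∈ S, auxRho A w (g x) (k x) s
      - S.card * (A.card : ℝ) ^ 3 / Fintype.card F) ^ 2 ≤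
      S.card * (m * m' * Fintype.card F * (A.card : ℝ) ^ 3) := by
  have e : ∑ x ∈ A, ∑ s ∈ S, auxRho A w (g x) (k x) s
      - S.card * (A.card : ℝ) ^ 3 / Fintype.card F =
      ∑ v ∈ A ×ˢ S, (auxRho A w (g v.1) (k v.1) v.2 - (A.card : ℝ) ^ 2 / Fintype.card F) := by
    rw [Finset.sum_sub_distrib, Finset.sum_product]
    simp
    ring
  rw [e]
  refine (sq_sum_le_card_mul_sum_sq).trans ?_
  rw [Finset.sum_product, Finset.card_product]
  have : ∑ x ∈ A, ∑ s ∈ S, (auxRho A w (g x) (k x) s - (A.card : ℝ) ^ 2 / Fintype.card F) ^ 2 ≤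
      m * m' * Fintype.card F * (A.card : ℝ) ^ 2 := by
    refine le_trans (Finset.sum_le_sum fun x _ => ?_) (auxEn_sum_g A g w m m' hg hw)
    rw [← auxRho_var A w (g x) (k x)]
    exact Finset.sum_le_sum_of_subset_of_nonneg (Finset.subset_univ _) fun _ _ _ => by positivity
  calc _ ≤ ((A.card * S.card : ℕ) : ℝ) * (m * m' * Fintype.card F * (A.card : ℝ) ^ 2) := by
        dsimp only
        gcongr
    _ = _ := by push_cast; ring

theorem aux_lower (A : Finset F) (g h w : F → F) (hg0 : ∀ x ∈ A, g x ≠ 0) :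
    (A.card : ℝ) ^ 4 ≤ (Finset.image₂ (fun x y => g x * (h x + y)) A A).card *
      ∑ x ∈ A, ∑ s ∈ Finset.image₂ (fun x y => w x + g x * (h x + y)) A A,
        auxRho A w (g x) (g x * h x) s := by
  set E := Finset.image₂ (fun x y => g x * (h x + y)) A A with hE
  set S := Finset.image₂ (fun x y => w x + g x * (h x + y)) A A with hS
  let f : F × F → F := fun v => g v.1 * (h v.1 + v.2)
  have hf : ∀ v ∈ A ×ˢ A, f v ∈ E := fun v hv =>
    Finset.mem_image₂_of_mem (Finset.mem_product.1 hv).1 (Finset.mem_product.1 hv).2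
  have h1 : (A.card : ℝ) ^ 2 = ∑ e ∈ E, ∑ v ∈ A ×ˢ A, if f v = e then (1 : ℝ) else 0 := by
    rw [Finset.sum_comm]
    rw [Finset.sum_congr rfl (g := fun _ => (1 : ℝ))
      (fun v hv => by rw [Finset.sum_ite_eq]; simp [hf v hv])]
    simp [sq]
  have h2 : ∑ e ∈ E, (∑ v ∈ A ×ˢ A, if f v = e then (1 : ℝ) else 0) ^ 2 ≤
      ∑ x ∈ A, ∑ s ∈ S, auxRho A w (g x) (g x * h x) s := by
    calc _ = ∑ v ∈ A ×ˢ A, ∑ u ∈ A ×ˢ A, if f u = f v then (1 : ℝ) else 0 := by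
          simp_rw [sq, Finset.sum_mul_sum]
          rw [Finset.sum_comm]
          refine Finset.sum_congr rfl fun v hv => ?_
          rw [Finset.sum_comm]
          refine Finset.sum_congr rfl fun u hu => ?_
          simp_rw [ite_mul, one_mul, zero_mul]
          rw [Finset.sum_ite_eq]
          simp [hf v hv]
      _ = ∑ x ∈ A, ∑ y ∈ A, ∑ z ∈ A, ∑ t ∈ A,
            if f (z, t) = f (x, y) then (1 : ℝ) else 0 := by
          rw [Finset.sum_product]
          simp_rw [Finset.sum_product]
      _ ≤ ∑ x ∈ A, ∑ y ∈ A, ∑ z ∈ A, ∑ s ∈ S,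
            if g x * y + g x * h x + w z = s then (1 : ℝ) else 0 := by
          refine Finset.sum_le_sum fun x hx => Finset.sum_le_sum fun y hy =>
            Finset.sum_le_sum fun z hz => ?_
          by_cases hex : ∃ t ∈ A, f (z, t) = f (x, y)
          · obtain ⟨t, ht, hft⟩ := hex
            have e1 : ∑ t' ∈ A, (if f (z, t') = f (x, y) then (1 : ℝ) else 0) =
                ∑ t' ∈ A, if t' = t then (1 : ℝ) else 0 := by
              refine Finset.sum_congr rfl fun t' _ => ?_
              have : f (z, t') = f (x, y) ↔ t' = t := by
                rw [← hft]
                simp [f, hg0 z hz]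
              simp [this]
            have e2 : g x * y + g x * h x + w z ∈ S := by
              have : g x * y + g x * h x + w z = w z + g z * (h z + t) := by
                simp only [f] at hft
                linear_combination -hft
              rw [this]
              exact Finset.mem_image₂_of_mem hz ht
            rw [e1, Finset.sum_ite_eq', Finset.sum_ite_eq]
            simp [ht, e2]
          · push Not at hex
            rw [Finset.sum_eq_zero (fun t ht => by simp [hex t ht])]
            positivity
      _ = _ := by
          refine Finset.sum_congr rfl fun x _ => ?_
          unfold auxRho
          rw [Finset.sum_comm (s := S), Finset.sum_product]
  calc (A.card : ℝ) ^ 4 = ((A.card : ℝ) ^ 2) ^ 2 := by ring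
    _ ≤ E.card * ∑ e ∈ E, (∑ v ∈ A ×ˢ A, if f v = e then (1 : ℝ) else 0) ^ 2 := by
        rw [h1]; exact sq_sum_le_card_mul_sum_sq
    _ ≤ _ := by gcongr

theorem aux_main (A : Finset F) (g h w : F → F) (m m' : ℕ) (hg0 : ∀ x ∈ A, g x ≠ 0)
    (hg : ∀ t, (A.filter fun x => g x = t).card ≤ m)
    (hw : ∀ t, (A.filter fun x => w x = t).card ≤ m') (M : ℝ) (hA : 0 < A.card)
    (hE : ((Finset.image₂ (fun x y => g x * (h x + y)) A A).card : ℝ) ≤ M)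
    (hS : ((Finset.image₂ (fun x y => w x + g x * (h x + y)) A A).card : ℝ) ≤ M) :
    Fintype.card F * (A.card : ℝ) / 2 ≤ M ^ 2 ∨
      (A.card : ℝ) ^ 5 ≤ M ^ 3 * (4 * m * m' * Fintype.card F) := by
  have hlow := aux_lower A g h w hg0
  have hup := aux_upper A (Finset.image₂ (fun x y => w x + g x * (h x + y)) A A) g
    (fun x => g x * h x) w m m' hg hw
  set E : ℝ := ((Finset.image₂ (fun x y => g x * (h x + y)) A A).card : ℝ)
  set S : ℝ := ((Finset.image₂ (fun x y => w x + g x * (h x + y)) A A).card : ℝ)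
  set N : ℝ := ∑ x ∈ A, ∑ s ∈ Finset.image₂ (fun x y => w x + g x * (h x + y)) A A,
        auxRho A w (g x) (g x * h x) s
  have hN : 0 ≤ N := Finset.sum_nonneg fun x _ => Finset.sum_nonneg fun s _ =>
    Finset.sum_nonneg fun v _ => by split_ifs <;> norm_num
  have hE0 : 0 ≤ E := Nat.cast_nonneg _
  have hS0 : 0 ≤ S := Nat.cast_nonneg _
  have hM0 : 0 ≤ M := hE0.trans hE
  have hn : (0 : ℝ) < A.card := by exact_mod_cast hA
  have hq : (0 : ℝ) < Fintype.card F := by exact_mod_cast Fintype.card_pos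
  set n : ℝ := (A.card : ℝ)
  set q : ℝ := (Fintype.card F : ℝ)
  rcases le_or_gt (q * n / 2) (M ^ 2) with h1 | h1
  · exact Or.inl h1
  right
  have a1 : n ^ 4 ≤ M * N := hlow.trans (by gcongr)
  have a2 : M * (S * n ^ 3 / q) ≤ n ^ 4 / 2 := by
    calc M * (S * n ^ 3 / q) ≤ M * (M * n ^ 3 / q) := by gcongr
      _ = M ^ 2 * (n ^ 3 / q) := by ring
      _ ≤ (q * n / 2) * (n ^ 3 / q) := by gcongr
      _ = n ^ 4 / 2 := by field_simp
  have a3 : n ^ 4 / 2 ≤ M * (N - S * n ^ 3 / q) := by linarith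
  have a4 : (n ^ 4 / 2) ^ 2 ≤ (M * (N - S * n ^ 3 / q)) ^ 2 := by gcongr
  have a5 : (M * (N - S * n ^ 3 / q)) ^ 2 ≤ M ^ 2 * (M * (m * m' * q * n ^ 3)) := by
    rw [mul_pow]
    gcongr
    exact hup.trans (by gcongr)
  have a6 := a4.trans a5
  have a7 : n ^ 3 * n ^ 5 ≤ n ^ 3 * (M ^ 3 * (4 * m * m' * q)) := by nlinarith
  exact le_of_mul_le_mul_left a7 (by positivity)

end Aux

/-- Theorem 6: for fixed `m, m'`, `1/2 < α < 1` and `0 < c₁ < c₂` there are `Δ > 0`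
and `κ > 0` such that for `f(x,y) = g(x)(h(x)+y)` with `μ(g) ≤ m` and any
`w : G → 𝔽_p` with `μ(w) ≤ m'`, every `A ⊆ G` with `c₁·p^α < |A| < c₂·p^α` satisfies
`max(|f(A,A)|, |S_w(f)(A,A)|) ≥ κ·|A|^{1+Δ}`, where `S_w(f)(x,y) = w(x) + f(x,y)`. -/
theorem stmt_14 (m m' : ℕ) (hm : 0 < m) (hm' : 0 < m')
    (α c₁ c₂ : ℝ) (hα₁ : 1 / 2 < α) (hα₂ : α < 1) (hc₁ : 0 < c₁) (hc₁₂ : c₁ < c₂) :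
    ∃ Δ : ℝ, 0 < Δ ∧ ∃ κ : ℝ, 0 < κ ∧ ∀ (p : ℕ), p.Prime →
    ∀ G : Finset (ZMod p), (0 : ZMod p) ∉ G → (1 : ZMod p) ∈ G →
      (∀ x ∈ G, ∀ y ∈ G, x * y ∈ G) → (∀ x ∈ G, x⁻¹ ∈ G) →
    ∀ g h : ZMod p → ZMod p, (∀ x ∈ G, g x ≠ 0) → (∀ x ∈ G, h x ≠ 0) →
      (∀ t : ZMod p, (G.filter fun x => g x = t).card ≤ m) →
    ∀ w : ZMod p → ZMod p,
      (∀ t : ZMod p, (G.filter fun x => w x = t).card ≤ m') →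
    ∀ A : Finset (ZMod p), A ⊆ G →
      c₁ * (p : ℝ) ^ α < (A.card : ℝ) → (A.card : ℝ) < c₂ * (p : ℝ) ^ α →
      max ((Finset.image₂ (fun x y => g x * (h x + y)) A A).card : ℝ)
          ((Finset.image₂ (fun x y => w x + g x * (h x + y)) A A).card : ℝ) ≥
        κ * (A.card : ℝ) ^ ((1 : ℝ) + Δ) := by
  have hα0 : 0 < α := by linarith
  have hc₂ : 0 < c₂ := hc₁.trans hc₁₂
  have hinv1 : 1 < 1 / α := by rw [lt_div_iff₀ hα0]; linarith
  have hinv2 : 1 / α < 2 := by rw [div_lt_iff₀ hα0]; linarith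
  have hmR : (0 : ℝ) < m := by exact_mod_cast hm
  have hmR' : (0 : ℝ) < m' := by exact_mod_cast hm'
  set β : ℝ := 1 / α with hβ
  set Δ : ℝ := min ((β - 1) / 2) ((2 - β) / 3) with hΔ
  set k1 : ℝ := (1 / c₂) ^ β / 2 with hk1
  set k2 : ℝ := c₁ ^ β / (4 * m * m') with hk2
  have hk1p : 0 < k1 := by positivity
  have hk2p : 0 < k2 := by positivity
  refine ⟨Δ, lt_min (by linarith) (by linarith),
    min (k1 ^ ((1 : ℝ) / 2)) (k2 ^ ((1 : ℝ) / 3)), lt_min (by positivity) (by positivity), ?_⟩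
  intro p hp G hG0 hG1 hGm hGi g h hg0 hh0 hg w hw A hAG hA1 hA2
  haveI : Fact p.Prime := ⟨hp⟩
  have hp0 : (0 : ℝ) < p := by exact_mod_cast hp.pos
  have hAR : (0 : ℝ) < A.card := lt_trans (by positivity) hA1
  have hA0 : 0 < A.card := by exact_mod_cast hAR
  have hA1' : (1 : ℝ) ≤ A.card := by exact_mod_cast hA0
  set M := max ((Finset.image₂ (fun x y => g x * (h x + y)) A A).card : ℝ)
          ((Finset.image₂ (fun x y => w x + g x * (h x + y)) A A).card : ℝ) with hM
  have hM0 : 0 ≤ M := le_trans (Nat.cast_nonneg _) (le_max_left _ _)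
  have main := aux_main A g h w m m' (fun x hx => hg0 x (hAG hx))
    (fun t => (Finset.card_le_card (Finset.filter_subset_filter _ hAG)).trans (hg t))
    (fun t => (Finset.card_le_card (Finset.filter_subset_filter _ hAG)).trans (hw t)) M hA0
    (le_max_left _ _) (le_max_right _ _)
  rw [ZMod.card] at main
  set n : ℝ := (A.card : ℝ)
  have hpα : ((p : ℝ) ^ α) ^ β = p := by
    rw [← Real.rpow_mul hp0.le, hβ, mul_one_div_cancel hα0.ne', Real.rpow_one]
  have hβ0 : 0 ≤ β := by linarith
  have hlo : c₁ ^ β * p ≤ n ^ β := by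
    have := Real.rpow_le_rpow (by positivity) hA1.le hβ0
    rwa [Real.mul_rpow hc₁.le (by positivity), hpα] at this
  have hhi : (1 / c₂) ^ β * n ^ β ≤ p := by
    have : (1 / c₂) * n ≤ (p : ℝ) ^ α := by
      rw [one_div_mul_eq_div, div_le_iff₀ hc₂]; linarith
    have := Real.rpow_le_rpow (by positivity) this hβ0
    rwa [Real.mul_rpow (by positivity) hAR.le, hpα] at this
  rcases main with h1 | h1
  · have e : k1 * n ^ (β + 1) ≤ M ^ (2 : ℝ) := by
      rw [Real.rpow_add hAR, Real.rpow_one, Real.rpow_two]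
      refine le_trans ?_ h1
      calc k1 * (n ^ β * n) = ((1 / c₂) ^ β * n ^ β) * n / 2 := by rw [hk1]; ring
        _ ≤ _ := by gcongr
    have e2 := Real.rpow_le_rpow (by positivity) e (show (0 : ℝ) ≤ 1 / 2 by norm_num)
    rw [Real.mul_rpow hk1p.le (by positivity), ← Real.rpow_mul hAR.le, ← Real.rpow_mul hM0,
      show (2 : ℝ) * (1 / 2) = 1 by norm_num, Real.rpow_one] at e2
    refine ge_iff_le.2 (le_trans ?_ e2)
    gcongr
    · exact min_le_left _ _
    · have : Δ ≤ (β - 1) / 2 := min_le_left _ _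
      linarith
  · have e : k2 * n ^ (5 - β) ≤ M ^ (3 : ℝ) := by
      have h2 : n ^ (5 : ℝ) = n ^ (5 - β) * n ^ β := by
        rw [← Real.rpow_add hAR]; congr 1; ring
      have h3 : n ^ (5 : ℝ) = n ^ 5 := by exact_mod_cast Real.rpow_natCast n 5
      have h4 : M ^ (3 : ℝ) = M ^ 3 := by exact_mod_cast Real.rpow_natCast M 3
      rw [h4]
      have h5 : n ^ (5 - β) * (c₁ ^ β * p) ≤ M ^ 3 * (4 * m * m' * p) := by
        refine le_trans ?_ h1
        rw [← h3, h2]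
        gcongr
      have h6 : n ^ (5 - β) * c₁ ^ β ≤ M ^ 3 * (4 * m * m') := by
        refine le_of_mul_le_mul_right ?_ hp0
        linarith
      rw [hk2, div_mul_eq_mul_div, div_le_iff₀ (by positivity)]
      linarith
    have e2 := Real.rpow_le_rpow (by positivity) e (show (0 : ℝ) ≤ 1 / 3 by norm_num)
    rw [Real.mul_rpow hk2p.le (by positivity), ← Real.rpow_mul hAR.le, ← Real.rpow_mul hM0,
      show (3 : ℝ) * (1 / 3) = 1 by norm_num, Real.rpow_one] at e2
    refine ge_iff_le.2 (le_trans ?_ e2)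
    gcongr
    · exact min_le_right _ _
    · have : Δ ≤ (2 - β) / 3 := min_le_right _ _
      linarith
end

section
/- For all reals 0 < c₁ < c₂ there exist θ > 0 and κ > 0 (depending only on c₁ and c₂) with the following property. Let p be a prime and A, B ⊆ 𝔽_p^* nonempty sets with |A| ≤ p^{1/2 − 1/400}, |B| ≤ p^{1/2 − 1/400}, and c₁·|B| ≤ |A| ≤ c₂·|B|. Define f(x,y) = xy(x + y). Then max( |f(A,B)|, |A·B| ) ≥ κ · |A|^{1 + θ}. -/
open Pointwise

open scoped Classical in
lemma drc {α β : Type*} (X : Finset α) (Y : Finset β)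
    (r : α → β → Prop) (M L : ℝ) (hM : 0 < M) (hL : 1 ≤ L)
    (hX : (X.card : ℝ) ≤ M) (hY : (Y.card : ℝ) ≤ M)
    (hE : M ^ 2 / L ≤ ∑ y ∈ Y, ((X.filter (fun x => r x y)).card : ℝ)) :
    ∃ N ⊆ X, M / (2 * L) ≤ N.card ∧
      8 * (((N ×ˢ N).filter (fun q => ((Y.filter (fun y => r q.1 y ∧ r q.2 y)).card : ℝ)
        < M / (16 * L ^ 2))).card : ℝ) ≤ (N.card : ℝ) ^ 2 := by
  have hL0 : 0 < L := by linarith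
  set N : β → Finset α := fun y => X.filter (fun x => r x y) with hN
  set cod : α × α → Finset β := fun q => Y.filter (fun y => r q.1 y ∧ r q.2 y) with hcod
  set bad := (X ×ˢ X).filter (fun q => ((cod q).card : ℝ) < M / (16 * L ^ 2)) with hbad
  set bd : β → Finset (α × α) := fun y => bad.filter (fun q => r q.1 y ∧ r q.2 y) with hbd
  have h1 : (M ^ 2 / L) ^ 2 ≤ M * ∑ y ∈ Y, ((N y).card : ℝ) ^ 2 := by
    calc (M ^ 2 / L) ^ 2 ≤ (∑ y ∈ Y, ((N y).card : ℝ)) ^ 2 := by gcongr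
      _ ≤ Y.card * ∑ y ∈ Y, ((N y).card : ℝ) ^ 2 := sq_sum_le_card_mul_sum_sq
      _ ≤ _ := mul_le_mul_of_nonneg_right hY (Finset.sum_nonneg fun _ _ => sq_nonneg _)
  have h1' : M ^ 3 / L ^ 2 ≤ ∑ y ∈ Y, ((N y).card : ℝ) ^ 2 := by
    refine le_of_mul_le_mul_left ?_ hM
    refine le_trans (le_of_eq ?_) h1
    field_simp
  have h2 : ∑ y ∈ Y, ((bd y).card : ℝ) ≤ M ^ 3 / (16 * L ^ 2) := by
    have e : ∑ y ∈ Y, ((bd y).card : ℝ) = ∑ q ∈ bad, ((cod q).card : ℝ) := by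
      simp only [hbd, hcod, Finset.card_filter, Nat.cast_sum]
      rw [Finset.sum_comm]
    rw [e]
    calc ∑ q ∈ bad, ((cod q).card : ℝ) ≤ ∑ q ∈ bad, M / (16 * L ^ 2) :=
          Finset.sum_le_sum fun q hq => (Finset.mem_filter.1 hq).2.le
      _ = bad.card * (M / (16 * L ^ 2)) := by simp
      _ ≤ (M * M) * (M / (16 * L ^ 2)) := by
          gcongr
          calc (bad.card : ℝ) ≤ ((X ×ˢ X).card : ℝ) := by
                exact_mod_cast Finset.card_filter_le _ _
            _ = X.card * X.card := by rw [Finset.card_product]; push_cast; rfl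
            _ ≤ _ := by gcongr
      _ = _ := by field_simp
  have h3 : ∃ y ∈ Y, M ^ 2 / (2 * L ^ 2) ≤ ((N y).card : ℝ) ^ 2 - 8 * (bd y).card := by
    by_contra! hcon
    have hYne : Y.Nonempty := by
      rw [Finset.nonempty_iff_ne_empty]
      rintro rfl
      simp at h1'
      have : 0 < M ^ 3 / L ^ 2 := by positivity
      linarith
    have := Finset.sum_lt_sum_of_nonempty hYne hcon
    rw [Finset.sum_sub_distrib, ← Finset.mul_sum, Finset.sum_const, nsmul_eq_mul] at this
    have h4 : (Y.card : ℝ) * (M ^ 2 / (2 * L ^ 2)) ≤ M * (M ^ 2 / (2 * L ^ 2)) := by gcongr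
    have h5 : M * (M ^ 2 / (2 * L ^ 2)) = M ^ 3 / L ^ 2 - 8 * (M ^ 3 / (16 * L ^ 2)) := by
      field_simp; ring
    linarith
  obtain ⟨y, -, hy⟩ := h3
  refine ⟨N y, Finset.filter_subset _ _, ?_, ?_⟩
  · have : (M / (2 * L)) ^ 2 ≤ ((N y).card : ℝ) ^ 2 := by
      have : (M / (2 * L)) ^ 2 = M ^ 2 / (2 * L ^ 2) / 2 := by field_simp
      have h0 : 0 ≤ M ^ 2 / (2 * L ^ 2) := by positivity
      have : (0:ℝ) ≤ (bd y).card := by positivity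
      linarith
    exact le_of_sq_le_sq this (by positivity) 
  · have : ((N y ×ˢ N y).filter (fun q => ((cod q).card : ℝ) < M / (16 * L ^ 2))) ⊆ bd y := by
      intro q hq
      simp only [hbd, hbad, hN, Finset.mem_filter, Finset.mem_product] at hq ⊢
      tauto
    have h6 : (((N y ×ˢ N y).filter
      (fun q => ((cod q).card : ℝ) < M / (16 * L ^ 2))).card : ℝ) ≤ (bd y).card := by
      exact_mod_cast Finset.card_le_card this
    have h0 : 0 ≤ M ^ 2 / (2 * L ^ 2) := by positivity
    linarith

open scoped Classical in
lemma drc2 {α : Type*} (N : Finset α) (b : α → α → Prop) (hb : ∀ x y, b x y → b y x)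
    (h : 8 * (((N ×ˢ N).filter (fun q => b q.1 q.2)).card : ℝ) ≤ (N.card : ℝ) ^ 2) :
    ∃ N' ⊆ N, (N.card : ℝ) / 2 ≤ N'.card ∧ ∀ x ∈ N', ∀ y ∈ N',
      (N.card : ℝ) / 2 ≤ (N.filter (fun z => ¬ b x z ∧ ¬ b z y)).card := by
  set N' := N.filter (fun x => ((N.filter (fun z => b x z)).card : ℝ) ≤ N.card / 4) with hN'
  refine ⟨N', Finset.filter_subset _ _, ?_, ?_⟩
  · have e : (((N ×ˢ N).filter (fun q => b q.1 q.2)).card : ℝ)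
        = ∑ x ∈ N, ((N.filter (fun z => b x z)).card : ℝ) := by
      simp only [Finset.card_filter, Nat.cast_sum]
      rw [Finset.sum_product]
    have hs : N.card = N'.card + (N \ N').card := by
      have hss : N' ⊆ N := Finset.filter_subset _ _
      have := Finset.card_sdiff_add_card_eq_card hss
      omega
    have hs' : (N.card : ℝ) = N'.card + (N \ N').card := by exact_mod_cast hs
    have h2 : ((N \ N').card : ℝ) * (N.card / 4) ≤
        ∑ x ∈ N, ((N.filter (fun z => b x z)).card : ℝ) := by
      calc ((N \ N').card : ℝ) * (N.card / 4) = ∑ x ∈ N \ N', ((N.card : ℝ) / 4) := by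
            rw [Finset.sum_const, nsmul_eq_mul]
        _ ≤ ∑ x ∈ N \ N', ((N.filter (fun z => b x z)).card : ℝ) := by
            refine Finset.sum_le_sum fun x hx => ?_
            simp only [hN', Finset.mem_sdiff, Finset.mem_filter, not_and, not_le] at hx
            exact (hx.2 hx.1).le
        _ ≤ _ := Finset.sum_le_sum_of_subset_of_nonneg Finset.sdiff_subset
            (fun _ _ _ => Nat.cast_nonneg _)
    rcases N.eq_empty_or_nonempty with h0 | h0
    · simp [h0]
    · have hpos : (0:ℝ) < N.card := by exact_mod_cast h0.card_pos
      have : ((N \ N').card : ℝ) ≤ N.card / 2 := by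
        refine le_of_mul_le_mul_right ?_ hpos
        nlinarith
      linarith
  · intro x hx y hy
    have hx2 := (Finset.mem_filter.1 hx).2
    have hy2 := (Finset.mem_filter.1 hy).2
    have hsub : N ⊆ (N.filter (fun z => ¬ b x z ∧ ¬ b z y)) ∪
        ((N.filter (fun z => b x z)) ∪ (N.filter (fun z => b y z))) := by
      intro z hz
      have := hb z y
      simp only [Finset.mem_union, Finset.mem_filter]
      tauto
    have h1 := (Finset.card_le_card hsub).trans (Finset.card_union_le _ _)
    have h2 := Finset.card_union_le (N.filter (fun z => b x z)) (N.filter (fun z => b y z))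
    have h3 : (N.card : ℝ) ≤ (N.filter (fun z => ¬ b x z ∧ ¬ b z y)).card +
      ((N.filter (fun z => b x z)).card + (N.filter (fun z => b y z)).card) := by
      exact_mod_cast h1.trans (by omega)
    linarith

open scoped Classical in
lemma bsg {G : Type*} [AddCommGroup G] [DecidableEq G] (X Y T : Finset G)
    (r : G → G → Prop) (M L : ℝ) (hM : 0 < M) (hL : 1 ≤ L)
    (hX : (X.card : ℝ) ≤ M) (hY : (Y.card : ℝ) ≤ M) (hT : (T.card : ℝ) ≤ M)
    (hr : ∀ x y, r x y → x + y ∈ T)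
    (hE : M ^ 2 / L ≤ ∑ y ∈ Y, ((X.filter (fun x => r x y)).card : ℝ)) :
    ∃ X' ⊆ X, M / (4 * L) ≤ X'.card ∧ ((X' - X').card : ℝ) ≤ 1024 * L ^ 5 * M := by
  have hL0 : 0 < L := by linarith
  obtain ⟨N, hNX, hN, hbad⟩ := drc X Y r M L hM hL hX hY hE
  obtain ⟨N', hN'N, hN', hgood⟩ := drc2 N
    (fun x z => ((Y.filter (fun y => r x y ∧ r z y)).card : ℝ) < M / (16 * L ^ 2))
    (by intro x y h; simpa only [and_comm] using h) hbad
  refine ⟨N', hN'N.trans hNX, ?_, ?_⟩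
  · have : M / (4 * L) = M / (2 * L) / 2 := by field_simp; ring
    linarith
  set Q := T ×ˢ T ×ˢ T ×ˢ T with hQ
  have hQc : (Q.card : ℝ) ≤ M ^ 4 := by
    simp only [hQ, Finset.card_product]; push_cast
    calc (T.card : ℝ) * (T.card * (T.card * T.card)) ≤ M * (M * (M * M)) := by gcongr
      _ = M ^ 4 := by ring
  set φ : G × G × G × G → G := fun t => t.1 - t.2.1 + t.2.2.1 - t.2.2.2 with hφ
  have key : ∀ d ∈ N' - N', M ^ 3 / (1024 * L ^ 5) ≤ ((Q.filter (fun t => φ t = d)).card : ℝ) := by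
    intro d hd
    obtain ⟨x, hx, x', hx', rfl⟩ := Finset.mem_sub.1 hd
    have hg := hgood x hx x' hx'
    set Z := N.filter (fun z => ¬ ((Y.filter (fun y => r x y ∧ r z y)).card : ℝ) < M / (16 * L ^ 2)
      ∧ ¬ ((Y.filter (fun y => r z y ∧ r x' y)).card : ℝ) < M / (16 * L ^ 2)) with hZ
    set P : Finset (Σ _ : G, G × G) := Z.sigma (fun z => (Y.filter (fun y => r x y ∧ r z y)) ×ˢ
      (Y.filter (fun y => r z y ∧ r x' y))) with hP
    have hPc : M ^ 3 / (1024 * L ^ 5) ≤ (P.card : ℝ) := by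
      rw [hP, Finset.card_sigma]
      push_cast [Finset.card_product]
      calc M ^ 3 / (1024 * L ^ 5) = (M / (2 * L) / 2) * (M / (16 * L ^ 2) * (M / (16 * L ^ 2))) := by
            field_simp; ring
        _ ≤ Z.card * (M / (16 * L ^ 2) * (M / (16 * L ^ 2))) := by
            gcongr
            linarith
        _ = ∑ z ∈ Z, (M / (16 * L ^ 2) * (M / (16 * L ^ 2))) := by simp
        _ ≤ _ := by
            refine Finset.sum_le_sum fun z hz => ?_
            have := (Finset.mem_filter.1 hz).2
            simp only [not_lt] at this
            have h1 := this.1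
            have h2 := this.2
            gcongr
    refine hPc.trans ?_
    norm_cast
    refine Finset.card_le_card_of_injOn
      (fun s => (x + s.2.1, s.1 + s.2.1, s.1 + s.2.2, x' + s.2.2)) ?_ ?_
    · rintro ⟨z, y1, y2⟩ hs
      simp only [hP, Finset.coe_sigma, Set.mem_sigma_iff, Finset.mem_coe, Finset.mem_product,
        Finset.mem_filter] at hs
      simp only [hQ, hφ, Finset.coe_filter, Finset.mem_product, Set.mem_ofPred_eq]
      obtain ⟨-, ⟨-, h1, h2⟩, -, h3, h4⟩ := hs
      refine ⟨⟨hr _ _ h1, hr _ _ h2, hr _ _ h3, hr _ _ h4⟩, by abel⟩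
    · rintro ⟨z, y1, y2⟩ _ ⟨w, v1, v2⟩ _ h
      simp only [Prod.mk.injEq] at h
      obtain ⟨h1, h2, h3, h4⟩ := h
      have e1 := add_left_cancel h1
      have e2 := add_left_cancel h4
      subst e1 e2
      have e3 := add_right_cancel h2
      subst e3
      rfl
  have hsum : ((N' - N').card : ℝ) * (M ^ 3 / (1024 * L ^ 5)) ≤ Q.card := by
    calc ((N' - N').card : ℝ) * (M ^ 3 / (1024 * L ^ 5)) = ∑ d ∈ N' - N', M ^ 3 / (1024 * L ^ 5) := by
          simp
      _ ≤ ∑ d ∈ N' - N', ((Q.filter (fun t => φ t = d)).card : ℝ) := Finset.sum_le_sum key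
      _ ≤ Q.card := by
          norm_cast
          rw [Finset.sum_card_fiberwise_eq_card_filter]
          exact Finset.card_filter_le _ _
  have : ((N' - N').card : ℝ) * (M ^ 3 / (1024 * L ^ 5)) ≤
      (1024 * L ^ 5 * M) * (M ^ 3 / (1024 * L ^ 5)) := by
    refine (hsum.trans hQc).trans (le_of_eq ?_)
    field_simp
  exact le_of_mul_le_mul_right this (by positivity)


lemma group_bounds {G : Type*} [CommGroup G] [DecidableEq G] (A B : Finset G)
    (hA : A.Nonempty) (hB : B.Nonempty) (K : ℝ) (hK : 1 ≤ K)
    (hAB : ((A * B).card : ℝ) ≤ K * A.card) (hc : (A.card : ℝ) ≤ K * B.card) :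
    ((A ^ 2 * B).card : ℝ) ≤ K ^ 8 * A.card ∧ ((A * B ^ 2).card : ℝ) ≤ K ^ 5 * A.card ∧
    ((A ^ 4 * B ^ 2).card : ℝ) ≤ K ^ 16 * A.card := by
  have hK0 : 0 < K := by linarith
  have ha : (0:ℝ) < A.card := by exact_mod_cast hA.card_pos
  have hb : (0:ℝ) < B.card := by exact_mod_cast hB.card_pos
  have hBm : ∀ m : ℕ, ((B ^ m).card : ℝ) ≤ K ^ m * A.card := by
    intro m
    have h := Finset.pluennecke_ruzsa_inequality_pow_mul hA B m
    have h' : ((B ^ m).card : ℝ) ≤ ((A * B).card / A.card : ℝ) ^ m * A.card := by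
      have := (NNRat.cast_le (K := ℝ)).2 h
      push_cast at this
      exact this
    refine h'.trans ?_
    gcongr
    rwa [div_le_iff₀ ha]
  have hbA : (B.card : ℝ) ≤ K * A.card := by
    refine le_trans ?_ hAB
    exact_mod_cast Finset.card_le_card_mul_left hA
  have hAm : ∀ m : ℕ, ((A ^ m).card : ℝ) ≤ K ^ (2 * m + 1) * A.card := by
    intro m
    have h := Finset.pluennecke_ruzsa_inequality_pow_mul hB A m
    have h' : ((A ^ m).card : ℝ) ≤ ((B * A).card / B.card : ℝ) ^ m * B.card := by
      have := (NNRat.cast_le (K := ℝ)).2 h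
      push_cast at this
      exact this
    refine h'.trans ?_
    calc ((B * A).card / B.card : ℝ) ^ m * B.card ≤ (K ^ 2) ^ m * (K * A.card) := by
          gcongr
          rw [div_le_iff₀ hb, mul_comm B A]
          nlinarith
      _ = _ := by ring
  have h2 : ((A * B ^ 2).card : ℝ) ≤ K ^ 5 * A.card := by
    have h := Finset.ruzsa_triangle_inequality_mul_mul_mul A B (B ^ 2)
    rw [← pow_succ'] at h
    have h' : ((A * B ^ 2).card : ℝ) * B.card ≤ (A * B).card * (B ^ 3).card := by exact_mod_cast h
    refine le_of_mul_le_mul_right (h'.trans ?_) hb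
    calc ((A * B).card : ℝ) * (B ^ 3).card ≤ (K * (K * B.card)) * (K ^ 3 * A.card) := by
          gcongr
          · exact hAB.trans (by gcongr)
          · exact hBm 3
      _ = _ := by ring
  refine ⟨?_, h2, ?_⟩
  · have h := Finset.ruzsa_triangle_inequality_mul_mul_mul (A ^ 2) A B
    rw [← pow_succ] at h
    have h' : ((A ^ 2 * B).card : ℝ) * A.card ≤ (A ^ 3).card * (A * B).card := by exact_mod_cast h
    refine le_of_mul_le_mul_right (h'.trans ?_) ha
    calc ((A ^ 3).card : ℝ) * (A * B).card ≤ (K ^ (2 * 3 + 1) * A.card) * (K * A.card) := by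
          gcongr
          exact hAm 3
      _ = _ := by ring
  · have h := Finset.ruzsa_triangle_inequality_mul_mul_mul (A ^ 4) A (B ^ 2)
    rw [← pow_succ] at h
    have h' : ((A ^ 4 * B ^ 2).card : ℝ) * A.card ≤ (A ^ 5).card * (A * B ^ 2).card := by
      exact_mod_cast h
    refine le_of_mul_le_mul_right (h'.trans ?_) ha
    calc ((A ^ 5).card : ℝ) * (A * B ^ 2).card ≤ (K ^ (2 * 5 + 1) * A.card) * (K ^ 5 * A.card) := by
          gcongr
          exact hAm 5
      _ = _ := by ring

lemma field_bounds {F : Type*} [Field F] [DecidableEq F] (A B : Finset F)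
    (hA : A.Nonempty) (hB : B.Nonempty) (hA0 : ∀ a ∈ A, a ≠ 0) (hB0 : ∀ a ∈ B, a ≠ 0)
    (K : ℝ) (hK : 1 ≤ K)
    (hAB : ((A * B).card : ℝ) ≤ K * A.card) (hc : (A.card : ℝ) ≤ K * B.card) :
    ((A ^ 2 * B).card : ℝ) ≤ K ^ 8 * A.card ∧ ((A * B ^ 2).card : ℝ) ≤ K ^ 5 * A.card ∧
    ((A ^ 4 * B ^ 2).card : ℝ) ≤ K ^ 16 * A.card := by
  classical
  have lift : ∀ S : Finset F, (∀ a ∈ S, a ≠ 0) → ∃ S' : Finset Fˣ, S'.image (Units.coeHom F) = S := by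
    intro S hS
    have : ∃ S' : Finset Fˣ, (S' : Set Fˣ) ⊆ Set.univ ∧ S'.image (Units.coeHom F) = S := by
      apply Finset.subset_set_image_iff.1
      intro a ha
      exact ⟨Units.mk0 a (hS a ha), trivial, rfl⟩
    obtain ⟨S', -, h⟩ := this
    exact ⟨S', h⟩
  have hinj : Function.Injective (Units.coeHom F) := fun x y h => Units.ext h
  obtain ⟨A', rfl⟩ := lift A hA0
  obtain ⟨B', rfl⟩ := lift B hB0
  simp only [← Finset.image_mul, ← Finset.image_pow, Finset.card_image_of_injective _ hinj] at *
  exact group_bounds A' B' (by simpa using hA) (by simpa using hB) K hK hAB hc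


lemma cs_image {α β : Type*} [DecidableEq α] [DecidableEq β] (s : Finset α) (t : Finset β) (f : α → β)
    (h : ∀ x ∈ s, f x ∈ t) :
    (s.card : ℝ) ^ 2 ≤ t.card * (((s ×ˢ s).filter (fun q => f q.1 = f q.2)).card : ℝ) := by
  have h1 : (s.card : ℝ) = ∑ y ∈ t, ((s.filter (fun x => f x = y)).card : ℝ) := by
    exact_mod_cast Finset.card_eq_sum_card_fiberwise h
  have h2 : (((s ×ˢ s).filter (fun q => f q.1 = f q.2)).card : ℝ)
      = ∑ y ∈ t, ((s.filter (fun x => f x = y)).card : ℝ) ^ 2 := by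
    rw [Finset.card_eq_sum_card_fiberwise (f := fun q : α × α => f q.1) (t := t)]
    · push_cast
      refine Finset.sum_congr rfl fun y _ => ?_
      rw [sq]
      norm_cast
      rw [← Finset.card_product]
      congr 1
      ext ⟨a, b⟩
      simp only [Finset.mem_filter, Finset.mem_product]
      constructor
      · rintro ⟨⟨⟨h1, h2⟩, h3⟩, h4⟩
        exact ⟨⟨h1, h4⟩, h2, h3 ▸ h4⟩
      · rintro ⟨⟨h1, h2⟩, h3, h4⟩
        exact ⟨⟨⟨h1, h3⟩, h2.trans h4.symm⟩, h2⟩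
    · intro q hq
      have := (Finset.mem_product.1 (Finset.mem_filter.1 hq).1).1
      exact h _ this
  rw [h2, h1]
  exact sq_sum_le_card_mul_sum_sq

lemma pivot {F : Type*} [Field F] [DecidableEq F] (D : Finset F) (hD : D.Nonempty)
    (hD0 : ∀ a ∈ D, a ≠ 0) (L : ℝ) (hL : 1 ≤ L) (hDD : ((D * D).card : ℝ) ≤ L * D.card) :
    ∃ b ∈ D, ∃ A ⊆ D, (D.card : ℝ) / (2 * L) ≤ A.card ∧ ∀ a ∈ A, (D.card : ℝ) / (2 * L) ≤
      ((D.image (a * ·)) ∩ (D.image (b * ·))).card := by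
  have hL0 : 0 < L := by linarith
  have hd : (0:ℝ) < D.card := by exact_mod_cast hD.card_pos
  have h1 := cs_image (D ×ˢ D) (D * D) (fun q => q.1 * q.2) (by
    intro q hq
    exact Finset.mul_mem_mul (Finset.mem_product.1 hq).1 (Finset.mem_product.1 hq).2)
  set E := ((D ×ˢ D) ×ˢ (D ×ˢ D)).filter (fun q => q.1.1 * q.1.2 = q.2.1 * q.2.2) with hE
  have h2 : E.card ≤ ∑ b ∈ D, ∑ a ∈ D, ((D.image (a * ·)) ∩ (D.image (b * ·))).card := by
    rw [Finset.card_eq_sum_card_fiberwise (f := fun q : (F × F) × (F × F) => q.2.1) (t := D)]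
    · refine Finset.sum_le_sum fun b hb => ?_
      rw [Finset.card_eq_sum_card_fiberwise (f := fun q : (F × F) × (F × F) => q.1.1) (t := D)]
      · refine Finset.sum_le_sum fun a ha => ?_
        refine Finset.card_le_card_of_injOn (fun q => q.1.1 * q.1.2) ?_ ?_
        · rintro ⟨⟨a', x⟩, ⟨b', y⟩⟩ hq
          simp only [hE, Finset.coe_filter, Finset.mem_filter, Finset.mem_product,
            Set.mem_ofPred_eq] at hq
          obtain ⟨⟨⟨⟨⟨_, h3⟩, _, h4⟩, h5⟩, rfl⟩, rfl⟩ := hq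
          simp only [Finset.coe_inter, Finset.coe_image]
          exact ⟨⟨x, h3, rfl⟩, ⟨y, h4, h5.symm⟩⟩
        · rintro ⟨⟨a', x⟩, ⟨b', y⟩⟩ hq ⟨⟨a'', x'⟩, ⟨b'', y'⟩⟩ hq' h
          simp only [hE, Finset.coe_filter, Finset.mem_filter, Finset.mem_product,
            Set.mem_ofPred_eq] at hq hq' h
          obtain ⟨⟨⟨_, h5⟩, rfl⟩, rfl⟩ := hq
          obtain ⟨⟨⟨_, h5'⟩, rfl⟩, rfl⟩ := hq'
          have e1 := mul_left_cancel₀ (hD0 _ ha) h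
          subst e1
          have e2 := mul_left_cancel₀ (hD0 _ hb) (h5.symm.trans h5')
          subst e2
          rfl
      · intro q hq
        simp only [hE, Finset.coe_filter, Finset.mem_filter, Finset.mem_product,
            Set.mem_ofPred_eq] at hq
        exact hq.1.1.1.1
    · intro q hq
      simp only [hE, Finset.coe_filter, Finset.mem_product,
            Set.mem_ofPred_eq] at hq
      exact hq.1.2.1
  have h2' : (E.card : ℝ) ≤ ∑ b ∈ D, ∑ a ∈ D, (((D.image (a * ·)) ∩ (D.image (b * ·))).card : ℝ) := by
    exact_mod_cast h2
  have h3 : (D.card : ℝ) ^ 3 / L ≤ E.card := by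
    rw [Finset.card_product] at h1
    push_cast at h1
    rw [div_le_iff₀ hL0]
    refine le_of_mul_le_mul_left ?_ hd
    calc (D.card : ℝ) * D.card ^ 3 = (D.card * D.card : ℝ) ^ 2 := by ring
      _ ≤ _ := h1
      _ ≤ (L * D.card) * E.card := by gcongr
      _ = _ := by ring
  have h4 : ∃ b ∈ D, (D.card : ℝ) ^ 2 / L ≤
      ∑ a ∈ D, (((D.image (a * ·)) ∩ (D.image (b * ·))).card : ℝ) := by
    refine Finset.exists_le_of_sum_le hD ?_
    rw [Finset.sum_const, nsmul_eq_mul]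
    refine le_trans (le_of_eq ?_) (h3.trans h2')
    ring
  obtain ⟨b, hb, h5⟩ := h4
  refine ⟨b, hb, D.filter (fun a => (D.card : ℝ) / (2 * L) ≤
      ((D.image (a * ·)) ∩ (D.image (b * ·))).card), Finset.filter_subset _ _, ?_,
      fun a ha => (Finset.mem_filter.1 ha).2⟩
  have h6 : ∑ a ∈ D, (((D.image (a * ·)) ∩ (D.image (b * ·))).card : ℝ) ≤
      ∑ a ∈ D, ((D.card : ℝ) / (2 * L) + D.card * (if (D.card : ℝ) / (2 * L) ≤
      ((D.image (a * ·)) ∩ (D.image (b * ·))).card then 1 else 0)) := by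
    refine Finset.sum_le_sum fun a _ => ?_
    split_ifs with h
    · have : (((D.image (a * ·)) ∩ (D.image (b * ·))).card : ℝ) ≤ D.card := by
        exact_mod_cast (Finset.card_le_card Finset.inter_subset_left).trans Finset.card_image_le
      have : 0 ≤ (D.card : ℝ) / (2 * L) := by positivity
      linarith
    · push Not at h
      linarith
  rw [Finset.sum_add_distrib, ← Finset.mul_sum, Finset.sum_const, nsmul_eq_mul,
    Finset.sum_boole] at h6
  refine le_of_mul_le_mul_left ?_ hd
  have h7 : (D.card : ℝ) ^ 2 / L = D.card * (D.card / (2 * L)) + D.card * (D.card / (2 * L)) := by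
    field_simp; ring
  linarith

lemma grow {p : ℕ} [Fact p.Prime] (A : Finset (ZMod p)) (hA : 1 < A.card) (L : ℝ) (hL : 0 ≤ L)
    (hp : (A.card : ℝ) ^ 2 ≤ L * p) :
    ∃ a ∈ A, ∃ b ∈ A, ∃ c ∈ A, ∃ d ∈ A, c ≠ d ∧ ∃ ξ : ZMod p, ξ * (c - d) = a - b ∧
      (A.card : ℝ) ^ 2 ≤ (1 + L) * ((A ×ˢ A).image (fun q => q.1 + (ξ + 1) * q.2)).card := by
  set R : ZMod p → Prop := fun ξ => ∃ a ∈ A, ∃ b ∈ A, ∃ c ∈ A, ∃ d ∈ A, c ≠ d ∧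
    ξ * (c - d) = a - b with hR
  suffices h : ∃ ξ, R ξ ∧
      (A.card : ℝ) ^ 2 ≤ (1 + L) * ((A ×ˢ A).image (fun q => q.1 + (ξ + 1) * q.2)).card by
    obtain ⟨ξ, ⟨a, ha, b, hb, c, hc, d, hd, hcd, h1⟩, h2⟩ := h
    exact ⟨a, ha, b, hb, c, hc, d, hd, hcd, ξ, h1, h2⟩
  by_cases hall : ∀ ξ, R ξ
  · have hp0 : (0:ℝ) < p := by exact_mod_cast (Fact.out : p.Prime).pos
    have hA0 : (0:ℝ) < A.card := by exact_mod_cast (by omega : 0 < A.card)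
    set E : ZMod p → Finset ((ZMod p × ZMod p) × (ZMod p × ZMod p)) := fun ξ =>
      ((A ×ˢ A) ×ˢ (A ×ˢ A)).filter (fun q => q.1.1 + ξ * q.1.2 = q.2.1 + ξ * q.2.2) with hE
    have hsum : ∑ ξ, ((E ξ).card : ℝ) ≤ p * (A.card ^ 2 + A.card ^ 4 / p) := by
      have e : ∑ ξ, ((E ξ).card : ℝ) = ∑ q ∈ (A ×ˢ A) ×ˢ (A ×ˢ A),
          ((Finset.univ.filter (fun ξ => q.1.1 + ξ * q.1.2 = q.2.1 + ξ * q.2.2)).card : ℝ) := by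
        simp only [hE, Finset.card_filter, Nat.cast_sum]
        rw [Finset.sum_comm]
      rw [e]
      calc _ ≤ ∑ q ∈ (A ×ˢ A) ×ˢ (A ×ˢ A), ((if q.1 = q.2 then (p:ℝ) else 0) + 1) := by
            refine Finset.sum_le_sum ?_
            rintro ⟨⟨a, b⟩, ⟨a', b'⟩⟩ _
            split_ifs with h
            · have := Finset.card_le_univ (Finset.univ.filter
                (fun ξ : ZMod p => a + ξ * b = a' + ξ * b'))
              rw [ZMod.card] at this
              have : ((Finset.univ.filter
                (fun ξ : ZMod p => a + ξ * b = a' + ξ * b')).card : ℝ) ≤ p := by exact_mod_cast this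
              simp only
              linarith
            · rw [zero_add]
              norm_cast
              rw [Finset.card_le_one]
              intro x hx y hy
              simp only [Finset.mem_filter, Finset.mem_univ, true_and] at hx hy
              have h1 : (x - y) * (b - b') = 0 := by linear_combination hx - hy
              rcases mul_eq_zero.1 h1 with h1 | h1
              · exact sub_eq_zero.1 h1
              · exfalso
                apply h
                have hb := sub_eq_zero.1 h1
                subst hb
                rw [add_right_cancel hx]
        _ = p * A.card ^ 2 + A.card ^ 4 := by
            rw [Finset.sum_add_distrib, Finset.sum_product]
            have : ∀ x ∈ A ×ˢ A, ∑ y ∈ A ×ˢ A, (if x = y then (p:ℝ) else 0) = p := by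
              intro x hx
              rw [Finset.sum_ite_eq, if_pos hx]
            simp only
            rw [Finset.sum_congr rfl this]
            simp only [Finset.sum_const, nsmul_eq_mul, Finset.card_product]
            push_cast
            ring
        _ = _ := by field_simp
    have hex : ∃ ξ ∈ (Finset.univ : Finset (ZMod p)), ((E ξ).card : ℝ) ≤ A.card ^ 2 + A.card ^ 4 / p := by
      refine Finset.exists_le_of_sum_le Finset.univ_nonempty ?_
      rw [Finset.sum_const, nsmul_eq_mul, Finset.card_univ, ZMod.card]
      exact hsum
    obtain ⟨ξ, -, hξ⟩ := hex
    refine ⟨ξ - 1, hall _, ?_⟩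
    rw [sub_add_cancel]
    have h1 := cs_image (A ×ˢ A) ((A ×ˢ A).image (fun q => q.1 + ξ * q.2)) (fun q => q.1 + ξ * q.2)
      (fun x hx => Finset.mem_image_of_mem _ hx)
    change _ ≤ _ * ((E ξ).card : ℝ) at h1
    have h2 : ((E ξ).card : ℝ) ≤ A.card ^ 2 * (1 + L) := by
      have : (A.card : ℝ) ^ 4 / p ≤ A.card ^ 2 * L := by
        rw [div_le_iff₀ hp0]
        calc (A.card : ℝ) ^ 4 = A.card ^ 2 * A.card ^ 2 := by ring
          _ ≤ A.card ^ 2 * (L * p) := by gcongr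
          _ = _ := by ring
      linarith
    rw [Finset.card_product] at h1
    push_cast at h1
    refine le_of_mul_le_mul_left ?_ (pow_pos hA0 2)
    calc (A.card : ℝ) ^ 2 * A.card ^ 2 = (A.card * A.card : ℝ) ^ 2 := by ring
      _ ≤ _ := h1
      _ ≤ _ * (A.card ^ 2 * (1 + L)) := by gcongr
      _ = _ := by ring
  · have hex : ∃ ξ, R ξ ∧ ¬ R (ξ + 1) := by
      by_contra! hcon
      apply hall
      have h0 : R 0 := by
        obtain ⟨c, hc, d, hd, hcd⟩ := Finset.one_lt_card.1 hA
        exact ⟨c, hc, c, hc, c, hc, d, hd, hcd, by ring⟩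
      have hn : ∀ n : ℕ, R n := by
        intro n
        induction n with
        | zero => simpa using h0
        | succ k ih => simpa using hcon _ ih
      intro ξ
      have := hn ξ.val
      rwa [ZMod.natCast_zmod_val] at this
    obtain ⟨ξ, h1, h2⟩ := hex
    refine ⟨ξ, h1, ?_⟩
    rw [Finset.card_image_of_injOn, Finset.card_product]
    · push_cast
      have : 0 ≤ (A.card : ℝ) * A.card := by positivity
      nlinarith
    · rintro ⟨a, b⟩ hab ⟨a', b'⟩ hab' h
      simp only [Finset.coe_product, Set.mem_prod, Finset.mem_coe] at hab hab' h
      by_cases hb : b = b'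
      · subst hb
        rw [add_right_cancel h]
      · exfalso
        apply h2
        refine ⟨a', hab'.1, a, hab.1, b, hab.2, b', hab'.2, hb, ?_⟩
        linear_combination h

lemma sum_product {p : ℕ} [Fact p.Prime] (D : Finset (ZMod p)) (hD : D.Nonempty)
    (hD0 : ∀ a ∈ D, a ≠ 0) (L : ℝ) (hL : 1 ≤ L) (hDD : ((D * D).card : ℝ) ≤ L * D.card)
    (hDs : ((D - D).card : ℝ) ≤ L * D.card) (hp : (D.card : ℝ) ^ 2 ≤ L * p) :
    (D.card : ℝ) ≤ 2 ^ 21 * L ^ 21 := by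
  have hL0 : 0 < L := by linarith
  have hd : (0:ℝ) < D.card := by exact_mod_cast hD.card_pos
  obtain ⟨y, hy, A, hAD, hA, hW⟩ := pivot D hD hD0 L hL hDD
  have hAle : (A.card : ℝ) ≤ D.card := by exact_mod_cast Finset.card_le_card hAD
  rcases le_or_gt A.card 1 with h1 | h1
  · have h1' : (A.card : ℝ) ≤ 1 := by exact_mod_cast h1
    have := hA.trans h1'
    rw [div_le_iff₀ (by positivity)] at this
    have h2 : L ≤ L ^ 21 := le_self_pow₀ hL (by norm_num)
    nlinarith
  have hsub : ∀ a ∈ A, ((D.image (y * ·) - D.image (a * ·)).card : ℝ) ≤ 2 * L ^ 3 * D.card := by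
    intro a ha
    set W := (D.image (a * ·)) ∩ (D.image (y * ·)) with hWd
    have hWc := hW a ha
    have hWpos : (0:ℝ) < W.card := lt_of_lt_of_le (by positivity) hWc
    have key : ∀ z, ∀ W' ⊆ D.image (z * ·), ((D.image (z * ·) - W').card : ℝ) ≤ L * D.card := by
      intro z W' hW'
      refine le_trans ?_ hDs
      have : D.image (z * ·) - W' ⊆ (D - D).image (z * ·) := by
        intro x hx
        obtain ⟨u, hu, v, hv, rfl⟩ := Finset.mem_sub.1 hx
        obtain ⟨u', hu', rfl⟩ := Finset.mem_image.1 hu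
        obtain ⟨v', hv', rfl⟩ := Finset.mem_image.1 (hW' hv)
        exact Finset.mem_image.2 ⟨u' - v', Finset.sub_mem_sub hu' hv', by ring⟩
      exact_mod_cast (Finset.card_le_card this).trans Finset.card_image_le
    have htri := Finset.ruzsa_triangle_inequality_sub_sub_sub (D.image (y * ·)) W (D.image (a * ·))
    have htri' : ((D.image (y * ·) - D.image (a * ·)).card : ℝ) * W.card ≤
      (D.image (y * ·) - W).card * (D.image (a * ·) - W).card := by exact_mod_cast htri
    refine le_of_mul_le_mul_right (htri'.trans ?_) hWpos
    calc _ ≤ (L * D.card) * (L * D.card) := by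
          gcongr
          · exact key y W Finset.inter_subset_right
          · exact key a W Finset.inter_subset_left
      _ = 2 * L ^ 3 * D.card * (D.card / (2 * L)) := by field_simp
      _ ≤ _ := by gcongr
  obtain ⟨a, ha, b, hb, c, hc, d, hdA, hcd, ξ, hξ, hgrow⟩ := grow A h1 L hL0.le (by
    refine le_trans ?_ hp
    gcongr)
  set I : ZMod p → Finset (ZMod p) := fun z => D.image (z * ·) with hI
  set C := (I a ∪ I b) ∪ (I c ∪ I d) with hC
  have hCy : ((I y - C).card : ℝ) ≤ 8 * L ^ 3 * D.card := by
    have : I y - C = ((I y - I a) ∪ (I y - I b)) ∪ ((I y - I c) ∪ (I y - I d)) := by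
      simp only [hC, Finset.sub_union]
    rw [this]
    have h1 := Finset.card_union_le ((I y - I a) ∪ (I y - I b)) ((I y - I c) ∪ (I y - I d))
    have h2 := Finset.card_union_le (I y - I a) (I y - I b)
    have h3 := Finset.card_union_le (I y - I c) (I y - I d)
    have h4 : (((((I y - I a) ∪ (I y - I b)) ∪ ((I y - I c) ∪ (I y - I d))).card : ℕ) : ℝ) ≤
      (I y - I a).card + (I y - I b).card + ((I y - I c).card + (I y - I d).card) := by
      exact_mod_cast h1.trans (by omega)
    have := hsub a ha
    have := hsub b hb
    have := hsub c hc
    have := hsub d hdA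
    linarith
  have hIy : ((I y).card : ℝ) = D.card := by
    rw [hI]
    simp only
    rw [Finset.card_image_of_injective _ (mul_right_injective₀ (hD0 y hy))]
  have hIyne : (I y).Nonempty := hD.image _
  have hpl : ((3 • C - 3 • C).card : ℝ) ≤ (8 * L ^ 3) ^ 6 * D.card := by
    have h := Finset.pluennecke_ruzsa_inequality_nsmul_sub_nsmul_sub hIyne C 3 3
    have h' := (NNRat.cast_le (K := ℝ)).2 h
    push_cast at h'
    rw [hIy] at h'
    refine h'.trans ?_
    gcongr
    rwa [div_le_iff₀ hd]
  have hinc : ((A ×ˢ A).image (fun q => q.1 + (ξ + 1) * q.2)).card ≤ (3 • C - 3 • C).card := by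
    refine Finset.card_le_card_of_injOn (fun x => (c - d) * x) ?_ ?_
    · intro x hx
      obtain ⟨⟨u, v⟩, huv, rfl⟩ := Finset.mem_image.1 hx
      obtain ⟨hu, hv⟩ := Finset.mem_product.1 huv
      have hu := hAD hu
      have hv := hAD hv
      simp only at hu hv ⊢
      have e : (c - d) * (u + (ξ + 1) * v) = (c * u + a * v + c * v) - (d * u + b * v + d * v) := by
        linear_combination v * hξ
      rw [e]
      have m : ∀ w ∈ D, a * w ∈ C ∧ b * w ∈ C ∧ c * w ∈ C ∧ d * w ∈ C := by
        intro w hw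
        have : ∀ z, z * w ∈ I z := fun z => Finset.mem_image_of_mem _ hw
        simp only [hC, Finset.mem_union]
        exact ⟨Or.inl (Or.inl (this a)), Or.inl (Or.inr (this b)), Or.inr (Or.inl (this c)),
          Or.inr (Or.inr (this d))⟩
      have h3 : 3 • C = C + C + C := by rw [succ_nsmul, two_nsmul]
      rw [h3]
      exact Finset.mem_coe.2 (Finset.sub_mem_sub
        (Finset.add_mem_add (Finset.add_mem_add (m u hu).2.2.1 (m v hv).1) (m v hv).2.2.1)
        (Finset.add_mem_add (Finset.add_mem_add (m u hu).2.2.2 (m v hv).2.1) (m v hv).2.2.2))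
    · exact (mul_right_injective₀ (sub_ne_zero.2 hcd)).injOn
  have hinc' : (((A ×ˢ A).image (fun q => q.1 + (ξ + 1) * q.2)).card : ℝ) ≤
    (8 * L ^ 3) ^ 6 * D.card := le_trans (by exact_mod_cast hinc) hpl
  have hfin : ((D.card : ℝ) / (2 * L)) ^ 2 ≤ (L + L) * ((8 * L ^ 3) ^ 6 * D.card) := by
    calc ((D.card : ℝ) / (2 * L)) ^ 2 ≤ (A.card : ℝ) ^ 2 := by gcongr
      _ ≤ _ := hgrow
      _ ≤ _ := by gcongr
  rw [div_pow, div_le_iff₀ (by positivity)] at hfin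
  refine le_of_mul_le_mul_right ?_ hd
  calc (D.card : ℝ) * D.card = (D.card : ℝ) ^ 2 := by ring
    _ ≤ _ := hfin
    _ = _ := by ring

lemma edges {F : Type*} [Field F] [DecidableEq F] (A B : Finset F)
    (hA0 : ∀ a ∈ A, a ≠ 0) (hB0 : ∀ a ∈ B, a ≠ 0) :
    A.card * B.card ≤ 3 * ((A ×ˢ B).image
      (fun q : F × F => (q.1 ^ 2 * q.2, q.1 * q.2 ^ 2))).card := by
  rw [← Finset.card_product]
  refine Finset.card_le_mul_card_image _ _ ?_
  rintro ⟨x, y⟩ -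
  refine le_trans (Finset.card_le_card_of_injOn (t := (Polynomial.nthRoots 3 (x ^ 2 / y)).toFinset)
    (fun q => q.1) ?_ ?_) ((Multiset.toFinset_card_le _).trans (Polynomial.card_nthRoots _ _))
  · rintro ⟨a, b⟩ h
    simp only [Finset.coe_filter, Finset.mem_product, Set.mem_ofPred_eq, Prod.mk.injEq] at h
    obtain ⟨⟨ha, hb⟩, rfl, rfl⟩ := h
    have := hA0 a ha
    have := hB0 b hb
    simp only [Finset.mem_coe, Multiset.mem_toFinset]
    rw [Polynomial.mem_nthRoots (by norm_num)]
    field_simp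
  · rintro ⟨a, b⟩ h ⟨a', b'⟩ h' e
    simp only [Finset.coe_filter, Finset.mem_product, Set.mem_ofPred_eq, Prod.mk.injEq] at h h' e
    subst e
    have h1 := h.2.1.trans h'.2.1.symm
    rw [mul_left_cancel₀ (pow_ne_zero 2 (hA0 a h.1.1)) h1]

lemma main_bound {p : ℕ} [Fact p.Prime] (A B : Finset (ZMod p))
    (hA : A.Nonempty) (hB : B.Nonempty) (hA0 : ∀ a ∈ A, a ≠ 0) (hB0 : ∀ a ∈ B, a ≠ 0)
    (K : ℝ) (hK : 2 ≤ K) (hAB : ((A * B).card : ℝ) ≤ K * A.card)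
    (hT : ((Finset.image₂ (fun x y => x * y * (x + y)) A B).card : ℝ) ≤ K * A.card)
    (hc : (A.card : ℝ) ≤ K * B.card) (hp : (A.card : ℝ) ^ 2 ≤ p) :
    (A.card : ℝ) ≤ K ^ 2680 := by
  classical
  have hK1 : 1 ≤ K := by linarith
  have hK0 : 0 < K := by linarith
  have ha : (0:ℝ) < A.card := by exact_mod_cast hA.card_pos
  obtain ⟨hX, hY, hXX⟩ := field_bounds A B hA hB hA0 hB0 K hK1 hAB hc
  have pw : ∀ i j : ℕ, i ≤ j → K ^ i ≤ K ^ j := fun i j h => pow_le_pow_right₀ hK1 h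
  have hE : (K ^ 8 * A.card) ^ 2 / K ^ 19 ≤ ∑ y ∈ A * B ^ 2,
      (((A ^ 2 * B).filter (fun x => ∃ a ∈ A, ∃ b ∈ B, a ^ 2 * b = x ∧ a * b ^ 2 = y)).card : ℝ) := by
    have h1 := edges A B hA0 hB0
    have h2 : ((A ×ˢ B).image
        (fun q : ZMod p × ZMod p => (q.1 ^ 2 * q.2, q.1 * q.2 ^ 2))).card ≤ ∑ y ∈ A * B ^ 2,
        ((A ^ 2 * B).filter
          (fun x => ∃ a ∈ A, ∃ b ∈ B, a ^ 2 * b = x ∧ a * b ^ 2 = y)).card := by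
      rw [Finset.card_eq_sum_card_fiberwise (f := fun q : ZMod p × ZMod p => q.2)
        (t := A * B ^ 2)]
      · refine Finset.sum_le_sum fun y _ => ?_
        refine Finset.card_le_card_of_injOn (fun q => q.1) ?_ ?_
        · rintro ⟨u, v⟩ h
          simp only [Finset.coe_filter, Finset.mem_image, Finset.mem_product, Set.mem_ofPred_eq,
            Prod.mk.injEq, Prod.exists] at h
          obtain ⟨⟨a, b, ⟨ha, hb⟩, rfl, rfl⟩, rfl⟩ := h
          refine Finset.mem_coe.2 (Finset.mem_filter.2 ⟨?_, a, ha, b, hb, rfl, rfl⟩)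
          exact Finset.mul_mem_mul (Finset.pow_mem_pow ha) hb
        · rintro ⟨u, v⟩ h ⟨u', v'⟩ h' e
          have h1 := (Finset.mem_filter.1 (Finset.mem_coe.1 h)).2
          have h2 := (Finset.mem_filter.1 (Finset.mem_coe.1 h')).2
          simp only at h1 h2 e
          rw [e, h1, h2]
      · intro q hq
        obtain ⟨⟨a, b⟩, hab, rfl⟩ := Finset.mem_image.1 hq
        obtain ⟨ha, hb⟩ := Finset.mem_product.1 hab
        exact Finset.mem_coe.2 (Finset.mul_mem_mul ha (Finset.pow_mem_pow hb))
    have h3 : (A.card * B.card : ℝ) ≤ 3 * ∑ y ∈ A * B ^ 2, (((A ^ 2 * B).filter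
          (fun x => ∃ a ∈ A, ∃ b ∈ B, a ^ 2 * b = x ∧ a * b ^ 2 = y)).card : ℝ) := by
      exact_mod_cast h1.trans (Nat.mul_le_mul_left 3 h2)
    have h4 : (K ^ 8 * A.card : ℝ) ^ 2 / K ^ 19 = A.card ^ 2 / K ^ 3 := by
      field_simp
    rw [h4, div_le_iff₀ (by positivity)]
    have h5 : (A.card : ℝ) ^ 2 ≤ K * (A.card * B.card) := by nlinarith
    have h6 : K * 3 ≤ K ^ 3 := by nlinarith [mul_pos hK0 hK0]
    set S := ∑ y ∈ A * B ^ 2, (((A ^ 2 * B).filter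
          (fun x => ∃ a ∈ A, ∃ b ∈ B, a ^ 2 * b = x ∧ a * b ^ 2 = y)).card : ℝ) with hS
    have hS0 : 0 ≤ S := Finset.sum_nonneg fun _ _ => Nat.cast_nonneg _
    calc (A.card : ℝ) ^ 2 ≤ K * (A.card * B.card) := h5
      _ ≤ K * (3 * S) := mul_le_mul_of_nonneg_left h3 hK0.le
      _ = S * (K * 3) := by ring
      _ ≤ S * K ^ 3 := mul_le_mul_of_nonneg_left h6 hS0
  obtain ⟨D, hDX, hDc, hDD⟩ := bsg (A ^ 2 * B) (A * B ^ 2)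
    (Finset.image₂ (fun x y => x * y * (x + y)) A B)
    (fun x y => ∃ a ∈ A, ∃ b ∈ B, a ^ 2 * b = x ∧ a * b ^ 2 = y) (K ^ 8 * A.card) (K ^ 19)
    (by positivity) (one_le_pow₀ hK1) hX
    (hY.trans (by gcongr ?_ * _; exact pw 5 8 (by norm_num)))
    (hT.trans (by gcongr ?_ * _; exact le_self_pow₀ hK1 (by norm_num)))
    (by
      rintro x y ⟨a, ha, b, hb, rfl, rfl⟩
      exact Finset.mem_image₂.2 ⟨a, ha, b, hb, by ring⟩)
    (by convert hE)
  have hnD : (A.card : ℝ) ≤ K ^ 13 * D.card := by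
    rw [div_le_iff₀ (by positivity)] at hDc
    have h4 : (4:ℝ) ≤ K ^ 2 := by nlinarith
    refine le_of_mul_le_mul_left (hDc.trans ?_) (pow_pos hK0 8)
    calc (D.card : ℝ) * (4 * K ^ 19) ≤ D.card * (K ^ 2 * K ^ 19) := by gcongr
      _ = _ := by ring
  have hDpos : (0:ℝ) < D.card := by
    by_contra h
    have : (D.card : ℝ) = 0 := le_antisymm (not_lt.1 h) (Nat.cast_nonneg _)
    rw [this] at hnD
    linarith
  have hDne : D.Nonempty := Finset.card_pos.1 (by exact_mod_cast hDpos)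
  have hD0 : ∀ x ∈ D, x ≠ 0 := by
    intro x hx
    obtain ⟨u, hu, b, hb, rfl⟩ := Finset.mem_mul.1 (hDX hx)
    rw [sq] at hu
    obtain ⟨a, ha, a', ha', rfl⟩ := Finset.mem_mul.1 hu
    exact mul_ne_zero (mul_ne_zero (hA0 a ha) (hA0 a' ha')) (hB0 b hb)
  have hmul : ((D * D).card : ℝ) ≤ K ^ 126 * D.card := by
    have h1 : D * D ⊆ A ^ 4 * B ^ 2 := by
      refine (Finset.mul_subset_mul hDX hDX).trans (le_of_eq ?_)
      rw [mul_mul_mul_comm, ← pow_add, ← sq]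
    calc ((D * D).card : ℝ) ≤ (A ^ 4 * B ^ 2).card := by exact_mod_cast Finset.card_le_card h1
      _ ≤ K ^ 16 * A.card := hXX
      _ ≤ K ^ 16 * (K ^ 13 * D.card) := by gcongr
      _ = K ^ 29 * D.card := by ring
      _ ≤ _ := by gcongr ?_ * _; exact pw _ _ (by norm_num)
  have hsub : ((D - D).card : ℝ) ≤ K ^ 126 * D.card := by
    have h2 : (1024:ℝ) ≤ K ^ 10 := by
      calc (1024:ℝ) = 2 ^ 10 := by norm_num
        _ ≤ _ := by gcongr
    calc ((D - D).card : ℝ) ≤ 1024 * (K ^ 19) ^ 5 * (K ^ 8 * A.card) := hDD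
      _ ≤ K ^ 10 * (K ^ 19) ^ 5 * (K ^ 8 * (K ^ 13 * D.card)) := by gcongr
      _ = _ := by ring
  have hDp : (D.card : ℝ) ^ 2 ≤ K ^ 126 * p := by
    calc (D.card : ℝ) ^ 2 ≤ (K ^ 8 * A.card) ^ 2 := by
          gcongr
          exact le_trans (by exact_mod_cast Finset.card_le_card hDX) hX
      _ = K ^ 16 * A.card ^ 2 := by ring
      _ ≤ K ^ 126 * p := by
          gcongr ?_ * ?_
          exact pw _ _ (by norm_num)
  have hfin := sum_product D hDne hD0 (K ^ 126) (one_le_pow₀ hK1) hmul hsub hDp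
  calc (A.card : ℝ) ≤ K ^ 13 * D.card := hnD
    _ ≤ K ^ 13 * (2 ^ 21 * (K ^ 126) ^ 21) := by gcongr
    _ ≤ K ^ 13 * (K ^ 21 * (K ^ 126) ^ 21) := by gcongr
    _ = K ^ 2680 := by rw [← pow_mul, ← pow_add, ← pow_add]


/-- Theorem 8: for all `0 < c₁ < c₂` there are `θ > 0` and `κ > 0` such that for every
prime `p` and all nonempty `A, B ⊆ 𝔽_p^*` with `|A|, |B| ≤ p^{1/2 − 1/400}` and
`c₁|B| ≤ |A| ≤ c₂|B|`, with `f(x,y) = xy(x+y)` one has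
`max(|f(A,B)|, |A·B|) ≥ κ·|A|^{1+θ}`. -/
theorem stmt_16 (c₁ c₂ : ℝ) (hc₁ : 0 < c₁) (hc₁₂ : c₁ < c₂) :
    ∃ θ : ℝ, 0 < θ ∧ ∃ κ : ℝ, 0 < κ ∧ ∀ (p : ℕ), p.Prime →
    ∀ A B : Finset (ZMod p), A.Nonempty → B.Nonempty →
      (∀ a ∈ A, a ≠ 0) → (∀ b ∈ B, b ≠ 0) →
      (A.card : ℝ) ≤ (p : ℝ) ^ ((1 : ℝ) / 2 - 1 / 400) →
      (B.card : ℝ) ≤ (p : ℝ) ^ ((1 : ℝ) / 2 - 1 / 400) →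
      c₁ * (B.card : ℝ) ≤ (A.card : ℝ) → (A.card : ℝ) ≤ c₂ * (B.card : ℝ) →
      max ((Finset.image₂ (fun x y => x * y * (x + y)) A B).card : ℝ) ((A * B).card : ℝ) ≥
        κ * (A.card : ℝ) ^ ((1 : ℝ) + θ) := by
  have hc₂ : 0 < c₂ := hc₁.trans hc₁₂
  set C : ℝ := max 2 c₂ with hC
  have hC2 : 2 ≤ C := le_max_left _ _
  have hC0 : 0 < C := by linarith
  refine ⟨1 / 2680, by norm_num, 1 / C, by positivity, ?_⟩
  intro p hp A B hA hB hA0 hB0 hAp _ _ hAB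
  have : Fact p.Prime := ⟨hp⟩
  set m : ℝ := max ((Finset.image₂ (fun x y => x * y * (x + y)) A B).card : ℝ) ((A * B).card : ℝ)
    with hm
  have ha : (0:ℝ) < A.card := by exact_mod_cast hA.card_pos
  have hb : (0:ℝ) < B.card := by exact_mod_cast hB.card_pos
  have hmA : (A.card : ℝ) ≤ m := by
    refine le_trans ?_ (le_max_right _ _)
    obtain ⟨b, hbB⟩ := hB
    have h1 : (A.image (· * b)).card = A.card :=
      Finset.card_image_of_injective _ (mul_left_injective₀ (hB0 b hbB))
    have h2 : A.image (· * b) ⊆ A * B := by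
      intro x hx
      obtain ⟨a, haA, rfl⟩ := Finset.mem_image.1 hx
      exact Finset.mul_mem_mul haA hbB
    have h3 := Finset.card_le_card h2
    rw [h1] at h3
    exact_mod_cast h3
  have hm0 : 0 < m := lt_of_lt_of_le ha hmA
  have hCK : C ≤ C * (m / A.card) := by
    refine le_mul_of_one_le_right hC0.le ?_
    rwa [one_le_div ha]
  have hmK : m ≤ C * (m / A.card) * A.card := by
    rw [mul_assoc, div_mul_cancel₀ _ ha.ne']
    exact le_mul_of_one_le_left hm0.le (by linarith)
  have hp1 : (1:ℝ) ≤ p := by exact_mod_cast hp.one_le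
  have hsq : (A.card : ℝ) ^ 2 ≤ p := by
    calc (A.card : ℝ) ^ 2 ≤ ((p : ℝ) ^ ((1 : ℝ) / 2)) ^ 2 := by
          gcongr
          exact hAp.trans (Real.rpow_le_rpow_of_exponent_le hp1 (by norm_num))
      _ = (p : ℝ) := by
          rw [← Real.rpow_natCast, ← Real.rpow_mul (by linarith)]
          norm_num
  have key := main_bound A B hA hB hA0 hB0 (C * (m / A.card)) (hC2.trans hCK)
    ((le_max_right _ _).trans hmK) ((le_max_left _ _).trans hmK)
    (hAB.trans (by gcongr; exact (le_max_right _ _).trans hCK)) hsq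
  have hroot : (A.card : ℝ) ^ ((1 : ℝ) / 2680) ≤ C * (m / A.card) := by
    have hKpos : 0 ≤ C * (m / A.card) := by positivity
    calc (A.card : ℝ) ^ ((1 : ℝ) / 2680) ≤ ((C * (m / A.card)) ^ 2680) ^ ((1 : ℝ) / 2680) := by
          gcongr
      _ = C * (m / A.card) := by
          rw [← Real.rpow_natCast, ← Real.rpow_mul hKpos]
          norm_num
  rw [ge_iff_le, Real.rpow_add ha, Real.rpow_one]
  calc 1 / C * (A.card * (A.card : ℝ) ^ ((1 : ℝ) / 2680))
      ≤ 1 / C * (A.card * (C * (m / A.card))) := by gcongr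
    _ = m := by field_simp
end
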